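/- For all m, n ∈ ℕ, the Born–Jordan ordering identity holds in End_ℂ(V): (1/(m+1)) · Σ_{l=0}^{m} (−iħ·a)^l ∘ (a†)^n ∘ (−iħ·a)^{m−l} = Σ_{s=0}^{min(m,n)} ((iħ)^s · m!·n!/((s+1)!·(m−s)!·(n−s)!)) · F^{(m−s,n−s)}. -/

import Mathlib

open Complex MvPolynomial Finset

noncomputable section

/-- The standard basis vector `e n` of `V = ℕ →₀ ℂ`. -/
def e (n : ℕ) : ℕ →₀ ℂ := Finsupp.single n 1

/-- The destruction operator `a`: `a (e 0) = 0`, `a (e (n+1)) = √(n+1) • e n`. -/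
def aop : (ℕ →₀ ℂ) →ₗ[ℂ] (ℕ →₀ ℂ) :=
  Finsupp.lsum ℂ fun n => match n with
    | 0 => 0
    | k + 1 => ((Real.sqrt (k + 1) : ℝ) : ℂ) • Finsupp.lsingle k

/-- The creation operator `a†`: `a† (e n) = √(n+1) • e (n+1)`. -/
def adop : (ℕ →₀ ℂ) →ₗ[ℂ] (ℕ →₀ ℂ) :=
  Finsupp.lsum ℂ fun n => ((Real.sqrt (n + 1) : ℝ) : ℂ) • Finsupp.lsingle (n + 1)

/-- `F^{(m,n)} = (−iℏ·a)^m ∘ (a†)^n` as an element of `End_ℂ(V)`. -/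
def F (ℏ : ℝ) (m n : ℕ) : Module.End ℂ (ℕ →₀ ℂ) :=
  ((-(Complex.I * ℏ)) • (aop : Module.End ℂ (ℕ →₀ ℂ))) ^ m * (adop : Module.End ℂ (ℕ →₀ ℂ)) ^ n

/-!
Write `L` and `R` for left and right multiplication by `P` and let `D = R - L`, so that
`∑ l, P ^ l * Y * P ^ (m - l)` is `∑ l, L ^ l * (L + D) ^ (m - l)` applied to `Y`. Since `L` and `D`
commute, this is `∑ s, (m + 1).choose (s + 1) • L ^ (m - s) * D ^ s`, the expansion of the formal
quotient `((L + D) ^ (m + 1) - L ^ (m + 1)) / D`. When the commutator `⁅X, P⁆` commutes with `X`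
and `P`, the derivation `D` acts on powers of `X` as `⁅X, P⁆` times differentiation with respect
to `X`.
-/

lemma sum_pow_mul_add_pow_of_commute {S : Type*} [Semiring S] {x y : S} (h : Commute x y) (m : ℕ) :
    ∑ l ∈ range (m + 1), x ^ l * (x + y) ^ (m - l) =
      ∑ s ∈ range (m + 1), (m + 1).choose (s + 1) • (x ^ (m - s) * y ^ s) := by
  induction m with
  | zero => simp
  | succ m ih =>
    have binomial : (x + y) ^ (m + 1) =
        ∑ s ∈ range (m + 2), (m + 1).choose s • (x ^ (m + 1 - s) * y ^ s) := by
      simp only [add_comm x y, h.symm.add_pow, (h.pow_pow _ _).eq, nsmul_eq_mul, Nat.cast_comm]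
    have shift : x * ∑ s ∈ range (m + 1), (m + 1).choose (s + 1) • (x ^ (m - s) * y ^ s) =
        ∑ s ∈ range (m + 2), (m + 1).choose (s + 1) • (x ^ (m + 1 - s) * y ^ s) := by
      rw [sum_range_succ _ (m + 1), Nat.choose_succ_self, zero_smul, add_zero, mul_sum]
      refine sum_congr rfl fun s hs => ?_
      rw [mul_smul_comm, ← mul_assoc, ← pow_succ', Nat.sub_add_comm (mem_range_succ_iff.mp hs)]
    calc ∑ l ∈ range (m + 2), x ^ l * (x + y) ^ (m + 1 - l)
        = x * ∑ l ∈ range (m + 1), x ^ l * (x + y) ^ (m - l) + (x + y) ^ (m + 1) := by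
          rw [sum_range_succ', mul_sum, pow_zero, one_mul, Nat.sub_zero]
          simp only [pow_succ' x, mul_assoc, Nat.add_sub_add_right]
      _ = ∑ s ∈ range (m + 2), (m + 2).choose (s + 1) • (x ^ (m + 1 - s) * y ^ s) := by
          simp only [ih, shift, binomial, ← sum_add_distrib, ← add_smul,
            Nat.choose_succ_succ' (m + 1), add_comm]

section CentralCommutator

variable {A : Type*} [Ring A] {X P : A}

lemma pow_lie_of_commute (hX : Commute ⁅X, P⁆ X) (n : ℕ) :
    ⁅X ^ n, P⁆ = n • (⁅X, P⁆ * X ^ (n - 1)) := by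
  induction n with
  | zero => simp [Ring.lie_def]
  | succ n ih =>
    have leibniz : ⁅X ^ (n + 1), P⁆ = X * ⁅X ^ n, P⁆ + ⁅X, P⁆ * X ^ n := by
      simp only [Ring.lie_def, pow_succ']
      noncomm_ring
    have absorb : n • (X * (⁅X, P⁆ * X ^ (n - 1))) = n • (⁅X, P⁆ * X ^ n) := by
      cases n with
      | zero => simp
      | succ k => rw [← mul_assoc, ← hX.eq, mul_assoc, Nat.add_sub_cancel, ← pow_succ']
    rw [leibniz, ih, mul_smul_comm, absorb, Nat.add_sub_cancel, succ_nsmul]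

lemma mulRight_sub_mulLeft_pow_apply_pow (hX : Commute ⁅X, P⁆ X) (hP : Commute ⁅X, P⁆ P)
    (n s : ℕ) :
    ((LinearMap.mulRight ℤ P - LinearMap.mulLeft ℤ P) ^ s) (X ^ n) =
      n.descFactorial s • (⁅X, P⁆ ^ s * X ^ (n - s)) := by
  induction s with
  | zero => simp
  | succ s ih =>
    have apply_eq (Y : A) :
        (LinearMap.mulRight ℤ P - LinearMap.mulLeft ℤ P) (⁅X, P⁆ ^ s * Y) =
          ⁅X, P⁆ ^ s * ⁅Y, P⁆ := by
      rw [LinearMap.sub_apply, LinearMap.mulRight_apply, LinearMap.mulLeft_apply, Ring.lie_def Y,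
        mul_sub, ← mul_assoc P, ← (hP.pow_left s).eq, mul_assoc, mul_assoc]
    rw [pow_succ', Module.End.mul_apply, ih, map_nsmul, apply_eq, pow_lie_of_commute hX,
      mul_smul_comm, smul_smul, ← mul_assoc, ← pow_succ, Nat.sub_sub, Nat.descFactorial_succ,
      mul_comm]

theorem sum_pow_mul_pow_mul_pow_of_commute_lie (hX : Commute ⁅X, P⁆ X) (hP : Commute ⁅X, P⁆ P)
    (m n : ℕ) :
    ∑ l ∈ range (m + 1), P ^ l * X ^ n * P ^ (m - l) =
      ∑ s ∈ range (m + 1), ((m + 1).choose (s + 1) * n.descFactorial s) •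
        (⁅X, P⁆ ^ s * (P ^ (m - s) * X ^ (n - s))) := by
  set L : Module.End ℤ A := LinearMap.mulLeft ℤ P with hL
  set R : Module.End ℤ A := LinearMap.mulRight ℤ P with hR
  have hLD : Commute L (R - L) :=
    (LinearMap.commute_mulLeft_right P P).sub_right (Commute.refl L)
  calc ∑ l ∈ range (m + 1), P ^ l * X ^ n * P ^ (m - l)
      = (∑ l ∈ range (m + 1), L ^ l * (L + (R - L)) ^ (m - l)) (X ^ n) := by
        simp [hL, hR, LinearMap.pow_mulLeft, LinearMap.pow_mulRight, mul_assoc]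
    _ = ∑ s ∈ range (m + 1), (m + 1).choose (s + 1) •
          (P ^ (m - s) * ((R - L) ^ s) (X ^ n)) := by
        rw [sum_pow_mul_add_pow_of_commute hLD]
        simp [hL, LinearMap.pow_mulLeft]
    _ = _ := by
        refine sum_congr rfl fun s _ => ?_
        rw [mulRight_sub_mulLeft_pow_apply_pow hX hP, mul_smul_comm, smul_smul, ← mul_assoc,
          ← (hP.pow_pow s (m - s)).eq, mul_assoc]

end CentralCommutator

lemma cast_choose_mul_descFactorial_div_succ {K : Type*} [Field K] [CharZero K] {m n s : ℕ}
    (hm : s ≤ m) (hn : s ≤ n) :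
    ((m + 1).choose (s + 1) * n.descFactorial s : K) / (m + 1) =
      (m.factorial * n.factorial : K) /
        ((s + 1).factorial * (m - s).factorial * (n - s).factorial) := by
  have factorial_ne (k : ℕ) : (k.factorial : K) ≠ 0 := Nat.cast_ne_zero.mpr k.factorial_ne_zero
  rw [Nat.cast_choose K (by gcongr : s + 1 ≤ m + 1), Nat.add_sub_add_right, Nat.factorial_succ m,
    ← Nat.factorial_mul_descFactorial hn]
  push_cast
  field_simp [factorial_ne]

theorem stmt13_general {K A : Type*} [Field K] [CharZero K] [Ring A] [Algebra K A] {X P : A} {c : K}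
    (h : ⁅X, P⁆ = c • (1 : A)) (m n : ℕ) :
    ((1 : K) / (m + 1)) • ∑ l ∈ range (m + 1), P ^ l * X ^ n * P ^ (m - l) =
      ∑ s ∈ range (min m n + 1),
        (c ^ s * (m.factorial * n.factorial : K) /
          ((s + 1).factorial * (m - s).factorial * (n - s).factorial)) •
          (P ^ (m - s) * X ^ (n - s)) := by
  have central (Y : A) : Commute ⁅X, P⁆ Y := h ▸ (Commute.one_left Y).smul_left c
  rw [sum_pow_mul_pow_mul_pow_of_commute_lie (central X) (central P), smul_sum]
  symm
  refine sum_subset_zero_on_sdiff (range_subset_range.mpr (by omega)) (fun s hs => ?_)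
    fun s hs => ?_
  · have hns : n < s := by simp only [mem_sdiff, mem_range] at hs; omega
    simp [Nat.descFactorial_of_lt hns]
  · have hsmn : s ≤ m ∧ s ≤ n := le_min_iff.mp (mem_range_succ_iff.mp hs)
    rw [mul_div_assoc, ← cast_choose_mul_descFactorial_div_succ hsmn.1 hsmn.2, h, smul_pow, one_pow,
      smul_mul_assoc, one_mul, ← Nat.cast_smul_eq_nsmul K, smul_smul, smul_smul]
    congr 1
    push_cast
    ring

lemma aop_single_zero (z : ℂ) : aop (Finsupp.single 0 z) = 0 := by
  simp [aop]

lemma aop_single_succ (n : ℕ) (z : ℂ) :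
    aop (Finsupp.single (n + 1) z) = Finsupp.single n ((√(n + 1) : ℝ) * z) := by
  simp [aop]

lemma adop_single (n : ℕ) (z : ℂ) :
    adop (Finsupp.single n z) = Finsupp.single (n + 1) ((√(n + 1) : ℝ) * z) := by
  simp [adop]

lemma ofReal_sqrt_succ_mul_self (n : ℕ) :
    ((√(n + 1) : ℝ) : ℂ) * (√(n + 1) : ℝ) = (n + 1 : ℕ) := by
  rw [← Complex.ofReal_mul, Real.mul_self_sqrt (by positivity)]
  norm_cast

lemma aop_adop_single (n : ℕ) (z : ℂ) :
    aop (adop (Finsupp.single n z)) = ((n + 1 : ℕ) : ℂ) • Finsupp.single n z := by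
  rw [adop_single, aop_single_succ, ← mul_assoc, ofReal_sqrt_succ_mul_self, Finsupp.smul_single,
    smul_eq_mul]

lemma adop_aop_single (n : ℕ) (z : ℂ) :
    adop (aop (Finsupp.single n z)) = (n : ℂ) • Finsupp.single n z := by
  cases n with
  | zero => simp [aop_single_zero]
  | succ k =>
    rw [aop_single_succ, adop_single, ← mul_assoc, ofReal_sqrt_succ_mul_self, Finsupp.smul_single,
      smul_eq_mul]

lemma lie_aop_adop : ⁅(aop : Module.End ℂ (ℕ →₀ ℂ)), (adop : Module.End ℂ (ℕ →₀ ℂ))⁆ = 1 := by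
  refine Finsupp.lhom_ext fun n z => ?_
  rw [Ring.lie_def, LinearMap.sub_apply, Module.End.mul_apply, Module.End.mul_apply,
    aop_adop_single, adop_aop_single, ← sub_smul, Nat.cast_succ, add_sub_cancel_left, one_smul,
    Module.End.one_apply]

lemma lie_adop_neg_smul_aop (c : ℂ) :
    ⁅(adop : Module.End ℂ (ℕ →₀ ℂ)), -c • (aop : Module.End ℂ (ℕ →₀ ℂ))⁆ = c • 1 := by
  rw [← lie_aop_adop, Ring.lie_def, Ring.lie_def, mul_smul_comm, smul_mul_assoc]
  module

/-- the Born–Jordan ordering identity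
`(1/(m+1)) Σ_{l=0}^m (−iℏa)^l (a†)^n (−iℏa)^{m−l}
  = Σ_{s=0}^{min(m,n)} ((iℏ)^s m!n!/((s+1)!(m−s)!(n−s)!)) F^{(m−s,n−s)}`. -/
theorem stmt13 (ℏ : ℝ) (hℏ : ℏ ≠ 0) (m n : ℕ) :
    ((1 : ℂ) / (m + 1)) •
        ∑ l ∈ Finset.range (m + 1),
          ((-(Complex.I * ℏ)) • (aop : Module.End ℂ (ℕ →₀ ℂ))) ^ l *
            (adop : Module.End ℂ (ℕ →₀ ℂ)) ^ n *
            ((-(Complex.I * ℏ)) • (aop : Module.End ℂ (ℕ →₀ ℂ))) ^ (m - l) =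
      ∑ s ∈ Finset.range (min m n + 1),
        ((Complex.I * ℏ) ^ s * (m.factorial * n.factorial : ℂ) /
          ((s + 1).factorial * (m - s).factorial * (n - s).factorial)) •
          F ℏ (m - s) (n - s) := by
  exact stmt13_general (lie_adop_neg_smul_aop (Complex.I * ℏ)) m n

end
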